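/- Suppose |V| = n with n even and n ≥ 4. Then the minimum total weight of a Hamiltonian cycle of (V,w) equals the minimum, over all S ⊆ V with |S| = n/2 and all distinct u, v ∈ S, of f(S,u,v) + f((V∖S) ∪ {u,v}, v, u). -/

import Mathlib

/-- The total weight of a walk given as a list of vertices: the sum of `w`
over consecutive pairs. -/
def pathCost {α : Type*} (w : α → α → ℕ∞) : List α → ℕ∞
  | [] => 0
  | [_] => 0
  | a :: b :: l => w a b + pathCost w (b :: l)

/-- `minPath w S u v` is the minimum, over all sequences listing each element of `S`
exactly once that start at `u` and end at `v`, of the sum of `w` over consecutive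
pairs; it is `⊤` if no such sequence exists. -/
noncomputable def minPath {α : Type*} [DecidableEq α]
    (w : α → α → ℕ∞) (S : Finset α) (u v : α) : ℕ∞ :=
  sInf {c | ∃ l : List α, l.Nodup ∧ l.toFinset = S ∧
      l.head? = some u ∧ l.getLast? = some v ∧ c = pathCost w l}

/-- The minimum total weight of a Hamiltonian cycle: the minimum over all cyclic
sequences visiting every vertex exactly once of the sum of `w` over all consecutive
pairs, including the pair closing the cycle (`⊤` if none of finite weight exists).
The closing edge is accounted for by appending the first vertex to the end. -/
noncomputable def minHamCycle {α : Type*} [Fintype α] [DecidableEq α]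
    (w : α → α → ℕ∞) : ℕ∞ :=
  sInf {c | ∃ l : List α, l.Nodup ∧ l.toFinset = Finset.univ ∧
      c = pathCost w (l ++ l.take 1)}

/-!
Cut a Hamiltonian cycle after its first `k ≥ 2` vertices, which run from `u` to `v` and form a
set `S`. The cycle consists of that arc and of the complementary arc, which leads from `v` back to
`u` through `V ∖ S`; the two arcs have exactly the vertices `u` and `v` in common. Conversely, two
such arcs glue to a Hamiltonian cycle, and the cost is additive under cutting and gluing.
-/

section Lists

variable {α : Type*}

theorem exists_eq_cons_append_singleton_of_head?_of_getLast? {l : List α} {u v : α} (huv : u ≠ v)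
    (hhead : l.head? = some u) (hlast : l.getLast? = some v) :
    ∃ M : List α, l = u :: M ++ [v] := by
  obtain ⟨init, rfl⟩ := List.getLast?_eq_some_iff.1 hlast
  cases init with
  | nil => exact absurd (by simpa using hhead) huv.symm
  | cons a M => exact ⟨M, by simpa using hhead⟩

theorem exists_eq_arc_append {l : List α} {k : ℕ} (hk : 2 ≤ k) (hkl : k ≤ l.length) :
    ∃ (u v : α) (M N : List α), l = u :: M ++ [v] ++ N ∧ (u :: M ++ [v]).length = k := by
  obtain ⟨m, rfl⟩ := Nat.exists_eq_add_of_le' hk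
  match l, hkl with
  | u :: t, hkl =>
    have hm : m < t.length := by simp only [List.length_cons] at hkl; omega
    refine ⟨u, t[m], t.take m, t.drop (m + 1), ?_, ?_⟩
    · simp
    · simpa using hm

variable [DecidableEq α]

theorem nodup_append_and_toFinset_eq_univ_iff [Fintype α] {P N : List α} :
    (P ++ N).Nodup ∧ (P ++ N).toFinset = Finset.univ ↔
      P.Nodup ∧ N.Nodup ∧ N.toFinset = Finset.univ \ P.toFinset := by
  simp only [List.nodup_append', List.disjoint_left, Finset.ext_iff, List.mem_toFinset,
    List.mem_append, Finset.mem_sdiff, Finset.mem_univ, true_and, iff_true]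
  grind

theorem nodup_cons_append_singleton_and_toFinset_eq_iff {u v : α} {T : Finset α} {N : List α}
    (huv : u ≠ v) (hu : u ∉ T) (hv : v ∉ T) :
    (v :: N ++ [u]).Nodup ∧ (v :: N ++ [u]).toFinset = T ∪ {u, v} ↔
      N.Nodup ∧ N.toFinset = T := by
  have hnodup : (v :: N ++ [u]).Nodup ↔ N.Nodup ∧ u ∉ N ∧ v ∉ N := by
    simp only [List.cons_append, List.nodup_cons, List.nodup_append]
    grind
  rw [hnodup]
  simp only [Finset.ext_iff, List.mem_toFinset, Finset.mem_union, Finset.mem_insert,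
    Finset.mem_singleton, List.cons_append, List.mem_cons, List.mem_append, List.not_mem_nil]
  grind

theorem nodup_and_toFinset_eq_univ_iff_arcs [Fintype α] {u v : α} {M N : List α} :
    (u :: M ++ [v] ++ N).Nodup ∧ (u :: M ++ [v] ++ N).toFinset = Finset.univ ↔
      (u :: M ++ [v]).Nodup ∧ (v :: N ++ [u]).Nodup ∧
        (v :: N ++ [u]).toFinset = (Finset.univ \ (u :: M ++ [v]).toFinset) ∪ {u, v} := by
  rw [nodup_append_and_toFinset_eq_univ_iff]
  refine and_congr_right fun hM ↦ ?_
  have huv : u ≠ v := by rintro rfl; simp at hM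
  exact (nodup_cons_append_singleton_and_toFinset_eq_iff huv (by simp) (by simp)).symm

end Lists

section Costs

variable {α : Type*} (w : α → α → ℕ∞)

theorem pathCost_append_cons (v : α) (B : List α) :
    ∀ A : List α, pathCost w (A ++ v :: B) = pathCost w (A ++ [v]) + pathCost w (v :: B)
  | [] => by simp [pathCost]
  | [a] => by simp [pathCost]
  | a :: b :: A => by
    have ih := pathCost_append_cons v B (b :: A)
    simp only [List.cons_append, pathCost] at ih ⊢
    rw [ih, add_assoc]

theorem pathCost_cycle_eq_add_arcs (u v : α) (M N : List α) :
    pathCost w ((u :: M ++ [v] ++ N) ++ (u :: M ++ [v] ++ N).take 1) =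
      pathCost w (u :: M ++ [v]) + pathCost w (v :: N ++ [u]) := by
  simpa using pathCost_append_cons w v (N ++ [u]) (u :: M)

variable [DecidableEq α] {S : Finset α} {u v : α}

theorem minPath_le_pathCost {M : List α} (hnodup : (u :: M ++ [v]).Nodup)
    (hS : (u :: M ++ [v]).toFinset = S) : minPath w S u v ≤ pathCost w (u :: M ++ [v]) :=
  sInf_le ⟨_, hnodup, hS, rfl, List.getLast?_concat, rfl⟩

variable {w} in
theorem exists_pathCost_eq_minPath (huv : u ≠ v) (htop : minPath w S u v ≠ ⊤) :
    ∃ M : List α, (u :: M ++ [v]).Nodup ∧ (u :: M ++ [v]).toFinset = S ∧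
      pathCost w (u :: M ++ [v]) = minPath w S u v := by
  obtain ⟨l, hnodup, hS, hhead, hlast, hcost⟩ : minPath w S u v ∈ _ :=
    csInf_mem (Set.nonempty_iff_ne_empty.2 fun hempty ↦ htop (by rw [minPath, hempty, sInf_empty]))
  obtain ⟨M, rfl⟩ := exists_eq_cons_append_singleton_of_head?_of_getLast? huv hhead hlast
  exact ⟨M, hnodup, hS, hcost.symm⟩

end Costs

section Cycles

variable {α : Type*} [Fintype α] [DecidableEq α] (w : α → α → ℕ∞)

theorem minHamCycle_le_minPath_add_minPath (S : Finset α) {u v : α} (huv : u ≠ v) :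
    minHamCycle w ≤ minPath w S u v + minPath w ((Finset.univ \ S) ∪ {u, v}) v u := by
  by_cases htop : minPath w S u v + minPath w ((Finset.univ \ S) ∪ {u, v}) v u = ⊤
  · exact htop ▸ le_top
  obtain ⟨htop₁, htop₂⟩ := WithTop.add_ne_top.1 htop
  obtain ⟨M, hM, rfl, hMcost⟩ := exists_pathCost_eq_minPath huv htop₁
  obtain ⟨N, hN, hMN, hNcost⟩ := exists_pathCost_eq_minPath huv.symm htop₂
  obtain ⟨hnodup, huniv⟩ := nodup_and_toFinset_eq_univ_iff_arcs.2 ⟨hM, hN, hMN⟩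
  rw [← hMcost, ← hNcost, ← pathCost_cycle_eq_add_arcs]
  exact sInf_le ⟨_, hnodup, huniv, rfl⟩

theorem exists_minPath_add_minPath_le_pathCost {l : List α} (hnodup : l.Nodup)
    (huniv : l.toFinset = Finset.univ) {k : ℕ} (hk : 2 ≤ k) (hkcard : k ≤ Fintype.card α) :
    ∃ S : Finset α, S.card = k ∧ ∃ u ∈ S, ∃ v ∈ S.erase u,
      minPath w S u v + minPath w ((Finset.univ \ S) ∪ {u, v}) v u ≤
        pathCost w (l ++ l.take 1) := by
  have hlength : l.length = Fintype.card α := by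
    rw [← List.toFinset_card_of_nodup hnodup, huniv, Finset.card_univ]
  obtain ⟨u, v, M, N, rfl, hcard⟩ := exists_eq_arc_append hk (hkcard.trans_eq hlength.symm)
  obtain ⟨hM, hN, hMN⟩ := nodup_and_toFinset_eq_univ_iff_arcs.1 ⟨hnodup, huniv⟩
  have hvu : v ≠ u := by rintro rfl; simp at hM
  refine ⟨(u :: M ++ [v]).toFinset, ?_, u, by simp, v, by simp [hvu], ?_⟩
  · rw [List.toFinset_card_of_nodup hM, hcard]
  · rw [pathCost_cycle_eq_add_arcs]
    exact add_le_add (minPath_le_pathCost w hM rfl) (minPath_le_pathCost w hN hMN)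

theorem minHamCycle_eq_split_general {k : ℕ} (hk : 2 ≤ k) (hkcard : k ≤ Fintype.card α) :
    minHamCycle w =
      (Finset.univ.powersetCard k).inf fun S ↦ S.inf fun u ↦ (S.erase u).inf fun v ↦
        minPath w S u v + minPath w ((Finset.univ \ S) ∪ {u, v}) v u := by
  apply le_antisymm
  · exact Finset.le_inf fun S _ ↦ Finset.le_inf fun u _ ↦ Finset.le_inf fun v hv ↦
      minHamCycle_le_minPath_add_minPath w S (Finset.ne_of_mem_erase hv).symm
  · refine le_sInf ?_
    rintro _ ⟨l, hnodup, huniv, rfl⟩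
    obtain ⟨S, hS, u, hu, v, hv, hle⟩ :=
      exists_minPath_add_minPath_le_pathCost w hnodup huniv hk hkcard
    exact Finset.inf_le_of_le (Finset.mem_powersetCard_univ.2 hS) <|
      Finset.inf_le_of_le hu <| Finset.inf_le_of_le hv hle

end Cycles

/-- If `|V| = n` with `n` even, `n ≥ 4`, then the minimum total weight of a
Hamiltonian cycle of `(V, w)` equals
`min_{S ⊆ V, |S| = n/2} min_{u, v ∈ S, u ≠ v} ( f(S,u,v) + f((V∖S) ∪ {u,v}, v, u) )`. -/
theorem minHamCycle_eq_split {α : Type*} [Fintype α] [DecidableEq α]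
    (w : α → α → ℕ∞) (n : ℕ) (hn : n = Fintype.card α)
    (heven : Even n) (hn4 : 4 ≤ n) :
    minHamCycle w =
      ((Finset.univ : Finset α).powerset.filter (fun S => S.card = n / 2)).inf
        (fun S => S.inf (fun u => (S.erase u).inf (fun v =>
          minPath w S u v + minPath w ((Finset.univ \ S) ∪ {u, v}) v u))) := by
  rw [← Finset.powersetCard_eq_filter]
  exact minHamCycle_eq_split_general w (by omega) (by omega)
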